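/- Let J ⊆ ℕ₀ⁿ be a finite nonempty index set and let 𝒫_J ⊆ C(𝕋ⁿ) be the linear span of the monomials z ↦ z^α, α ∈ J, with the supremum norm on 𝕋ⁿ (by the maximum modulus principle this equals the supremum norm over the closed unit polydisc, so 𝒫_J is isometric to 𝒫_J(ℓ∞ⁿ)). Then inf{‖Q‖ : Q a bounded linear projection of C(𝕋ⁿ) onto 𝒫_J} = ∫_{𝕋ⁿ} |Σ_{α∈J} z^α| dz, where dz is the normalized Haar measure on 𝕋ⁿ. Moreover, if |α| = α₁ + ⋯ + α_n ≤ m for every α ∈ J, then 2^{−m/2} · √|J| ≤ ∫_{𝕋ⁿ} |Σ_{α∈J} z^α| dz ≤ √|J|. -/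

import Mathlib

/-!
The monomials are pairwise distinct characters of the compact abelian group `𝕋ⁿ`. Write
`D = ∑ α ∈ J, z ^ α` for the kernel of the orthogonal projection onto their span.

*Projection constant.* The orthogonal projection is convolution with `D`, so its norm on `C(𝕋ⁿ)` is
at most `∫ |D|`. Conversely (Rudin's averaging argument), if `Q` is any projection onto the span and
`T_a f = f (a ·)`, then the average over `a` of `(Q T_a f) (a⁻¹)` equals `∑ α ∈ J, f̂(α) = ∫ f · conj D`
and is bounded by `‖Q‖ ‖f‖`; taking for `f` the continuous functions `D / (|D| + ε)` gives
`∫ |D| ≤ ‖Q‖` (`IsCharFamily.le_norm_proj`). This part is done for any finite family of characters.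

*Upper `L¹` bound.* Cauchy–Schwarz and Parseval.

*Lower `L¹` bound.* This is Weissler's inequality `∑ 2^(-|α|) |c_α|² ≤ (∫ |∑ c_α z ^ α|)²`. In one
variable (`weissler_one`), it holds for the square of a polynomial `g`, since the `k`-th coefficient
of `g²` is a sum of `k + 1 ≤ 2 ^ k` products; it passes to uniform limits of such squares, which
include all products of a constant and factors `1 - w z` with `|w| ≤ 1`; and a general polynomial is
brought to this form by reflecting its zeros `ζ` in the disc across the circle, which changes `z - ζ`
to `1 - ζ̄ z`, preserves the modulus on the circle and does not decrease the left-hand side. The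
several-variable case (`weissler_pi`) follows by induction with Minkowski's integral inequality.
-/

open MeasureTheory

/-- The monomial `z ↦ z^α`, `α ∈ ℕ₀ⁿ`, on the `n`-dimensional torus, as a continuous map. -/
noncomputable def torusMonomial (n : ℕ) (α : Fin n → ℕ) : C((Fin n → Circle), ℂ) :=
  ⟨fun z => ∏ j, ((z j ^ α j : Circle) : ℂ), by
    refine continuous_finset_prod _ fun j _ => ?_
    exact continuous_subtype_val.comp ((continuous_apply j).pow (α j))⟩

set_option linter.unusedSectionVars false

/-! ### Characters of compact abelian groups and projections onto their spans -/

section CharacterFamilies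

variable {G : Type*} [CommGroup G] [TopologicalSpace G] [IsTopologicalGroup G] [CompactSpace G]
  [MeasurableSpace G] [BorelSpace G] {ι : Type*}

/-- A family of pairwise distinct continuous unitary characters of `G`, viewed as elements of
`C(G, ℂ)`. -/
structure IsCharFamily (χ : ι → C(G, ℂ)) : Prop where
  mul : ∀ i x y, χ i (x * y) = χ i x * χ i y
  norm : ∀ i x, ‖χ i x‖ = 1
  distinct : ∀ i j, i ≠ j → ∃ w, χ i w ≠ χ j w

lemma IsCharFamily.mul_conj {χ : ι → C(G, ℂ)} (h : IsCharFamily χ) (i : ι) (x : G) :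
    χ i x * star (χ i x) = 1 := by
  have := Complex.mul_conj' (χ i x)
  rw [h.norm] at this
  simpa using this

lemma IsCharFamily.inv {χ : ι → C(G, ℂ)} (h : IsCharFamily χ) (i : ι) (w : G) :
    χ i w⁻¹ = star (χ i w) := by
  have hne : ∀ x, χ i x ≠ 0 := fun x => by rw [← norm_ne_zero_iff, h.norm]; exact one_ne_zero
  have h1 : χ i 1 = 1 := by
    have := h.mul i 1 1
    rw [mul_one] at this
    exact mul_left_cancel₀ (hne 1) (by rw [← this, mul_one])
  have h2 : χ i w * χ i w⁻¹ = 1 := by rw [← h.mul, mul_inv_cancel, h1]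
  exact mul_left_cancel₀ (hne w) (by rw [h2, h.mul_conj])

lemma integrable_of_continuous (μ : Measure G) [IsFiniteMeasure μ] {E : Type*}
    [NormedAddCommGroup E] {f : G → E} (hf : Continuous f) : Integrable f μ :=
  hf.integrable_of_hasCompactSupport (HasCompactSupport.of_compactSpace f)

/-- The Fourier coefficient functional `f ↦ ∫ f · conj φ`, bounded on `C(G, ℂ)`. -/
noncomputable def fourierCoef (μ : Measure G) [IsProbabilityMeasure μ] (φ : C(G, ℂ)) :
    C(G, ℂ) →L[ℂ] ℂ :=
  LinearMap.mkContinuous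
    { toFun := fun f => ∫ x, f x * star (φ x) ∂μ
      map_add' := fun f g => by
        rw [← integral_add (integrable_of_continuous μ (by fun_prop))
          (integrable_of_continuous μ (by fun_prop))]
        simp [add_mul]
      map_smul' := fun c f => by
        simp [mul_assoc, integral_const_mul] } ‖φ‖ (fun f => by
    have := norm_integral_le_of_norm_le_const (μ := μ) (f := fun x => f x * star (φ x))
      (C := ‖φ‖ * ‖f‖) (Filter.Eventually.of_forall fun x => by
        rw [norm_mul, norm_star, mul_comm]
        gcongr
        · exact φ.norm_coe_le_norm x
        · exact f.norm_coe_le_norm x)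
    simpa using this)

lemma fourierCoef_apply (μ : Measure G) [IsProbabilityMeasure μ] (φ f : C(G, ℂ)) :
    fourierCoef μ φ f = ∫ x, f x * star (φ x) ∂μ := rfl

variable {μ : Measure G} [IsProbabilityMeasure μ] [μ.IsMulLeftInvariant]

lemma IsCharFamily.fourierCoef_self {χ : ι → C(G, ℂ)} (h : IsCharFamily χ) (i : ι) :
    fourierCoef μ (χ i) (χ i) = 1 := by
  simp only [fourierCoef_apply, h.mul_conj]
  simp

lemma IsCharFamily.fourierCoef_ne {χ : ι → C(G, ℂ)} (h : IsCharFamily χ) {i j : ι}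
    (hij : i ≠ j) : fourierCoef μ (χ j) (χ i) = 0 := by
  obtain ⟨w, hw⟩ := h.distinct i j hij
  rw [fourierCoef_apply]
  -- translating the variable by `w` multiplies the integral by `χ i w * conj (χ j w) ≠ 1`
  have key := integral_mul_left_eq_self (μ := μ) (fun x => χ i x * star (χ j x)) w
  have e : (fun x => χ i (w * x) * star (χ j (w * x)))
      = fun x => (χ i w * star (χ j w)) * (χ i x * star (χ j x)) := by
    funext x
    rw [h.mul, h.mul, star_mul]; ring
  simp only [e] at key
  rw [integral_const_mul] at key
  by_contra hne
  have h1 : χ i w * star (χ j w) = 1 := mul_right_cancel₀ hne (by rw [key, one_mul])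
  apply hw
  calc χ i w = χ i w * (χ j w * star (χ j w)) := by rw [h.mul_conj, mul_one]
    _ = (χ i w * star (χ j w)) * χ j w := by ring
    _ = χ j w := by rw [h1, one_mul]

lemma IsCharFamily.fourierCoef_sum {χ : ι → C(G, ℂ)} (h : IsCharFamily χ) [DecidableEq ι]
    (s : Finset ι) (c : ι → ℂ) (j : ι) :
    fourierCoef μ (χ j) (∑ i ∈ s, c i • χ i) = if j ∈ s then c j else 0 := by
  rw [map_sum]
  have : ∀ i, fourierCoef μ (χ j) (c i • χ i) = if j = i then c i else 0 := by
    intro i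
    rw [map_smul]
    split_ifs with hh
    · subst hh; rw [h.fourierCoef_self]; simp
    · rw [h.fourierCoef_ne (Ne.symm hh)]; simp
  simp_rw [this]
  rw [Finset.sum_ite_eq]

/-- Parseval's identity for a finite combination of characters. -/
lemma IsCharFamily.parseval {χ : ι → C(G, ℂ)} (h : IsCharFamily χ)
    (s : Finset ι) (c : ι → ℂ) :
    ∫ x, ‖(∑ i ∈ s, c i • χ i) x‖ ^ 2 ∂μ = ∑ i ∈ s, ‖c i‖ ^ 2 := by
  classical
  set F : C(G, ℂ) := ∑ i ∈ s, c i • χ i with hF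
  have h1 : ∀ x, ((‖F x‖ ^ 2 : ℝ) : ℂ) = ∑ i ∈ s, star (c i) * (F x * star (χ i x)) := by
    intro x
    have : ((‖F x‖ ^ 2 : ℝ) : ℂ) = F x * star (F x) := by
      have := Complex.mul_conj' (F x)
      simpa using this.symm
    rw [this]
    conv_lhs => rw [hF]
    rw [← hF]
    have h2 : star (F x) = ∑ i ∈ s, star (c i) * star (χ i x) := by
      rw [hF]; simp [ContinuousMap.sum_apply]
    rw [h2, Finset.mul_sum]
    exact Finset.sum_congr rfl fun i _ => by ring
  have h2 : ((∫ x, ‖F x‖ ^ 2 ∂μ : ℝ) : ℂ) = ((∑ i ∈ s, ‖c i‖ ^ 2 : ℝ) : ℂ) := by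
    rw [← integral_complex_ofReal]
    simp_rw [h1]
    rw [integral_finsetSum _ (fun i _ => integrable_of_continuous μ (by fun_prop))]
    push_cast
    refine Finset.sum_congr rfl fun i hi => ?_
    rw [integral_const_mul, ← fourierCoef_apply, hF, h.fourierCoef_sum, if_pos hi]
    have := Complex.conj_mul' (c i)
    simpa using this
  exact_mod_cast h2

/-- Cauchy–Schwarz on a probability space. -/
lemma integral_norm_le_sqrt (F : C(G, ℂ)) :
    ∫ x, ‖F x‖ ∂μ ≤ Real.sqrt (∫ x, ‖F x‖ ^ 2 ∂μ) := by
  apply Real.le_sqrt_of_sq_le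
  have := ConvexOn.map_integral_le (μ := μ) (f := fun x => ‖F x‖) (g := fun t : ℝ => t ^ 2)
    (s := Set.univ) (even_two.convexOn_pow) (by fun_prop) isClosed_univ
    (by simp) (integrable_of_continuous μ (by fun_prop))
    (integrable_of_continuous μ (by simp only [Function.comp_def]; fun_prop))
  simpa using this

/-- The orthogonal (Fourier) projection onto the span of the characters indexed by `J`. -/
noncomputable def fourierProj (μ : Measure G) [IsProbabilityMeasure μ] (χ : ι → C(G, ℂ))
    (J : Finset ι) : C(G, ℂ) →L[ℂ] C(G, ℂ) :=
  ∑ i ∈ J, (fourierCoef μ (χ i)).smulRight (χ i)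

lemma fourierProj_apply (χ : ι → C(G, ℂ)) (J : Finset ι) (f : C(G, ℂ)) :
    fourierProj μ χ J f = ∑ i ∈ J, fourierCoef μ (χ i) f • χ i := by
  simp [fourierProj]

lemma fourierProj_mem (χ : ι → C(G, ℂ)) (J : Finset ι) (f : C(G, ℂ)) :
    fourierProj μ χ J f ∈ Submodule.span ℂ (χ '' ↑J) := by
  rw [fourierProj_apply]
  exact Submodule.sum_mem _ fun i hi =>
    Submodule.smul_mem _ _ (Submodule.subset_span ⟨i, hi, rfl⟩)

lemma IsCharFamily.fourierProj_eq {χ : ι → C(G, ℂ)} (h : IsCharFamily χ) (J : Finset ι)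
    {f : C(G, ℂ)} (hf : f ∈ Submodule.span ℂ (χ '' ↑J)) : fourierProj μ χ J f = f := by
  classical
  induction hf using Submodule.span_induction with
  | mem f hf =>
    obtain ⟨j, hj, rfl⟩ := hf
    rw [fourierProj_apply, Finset.sum_eq_single_of_mem j hj, h.fourierCoef_self, one_smul]
    intro i _ hij
    rw [h.fourierCoef_ne hij.symm, zero_smul]
  | zero => simp
  | add f g _ _ hf hg => rw [map_add, hf, hg]
  | smul c f _ hf => rw [map_smul, hf]

/-- The Fourier projection is convolution with `∑ i ∈ J, χ i`, so its norm is at most the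
`L¹` norm of this kernel. -/
lemma IsCharFamily.norm_fourierProj_le {χ : ι → C(G, ℂ)} (h : IsCharFamily χ) (J : Finset ι) :
    ‖fourierProj μ χ J‖ ≤ ∫ z, ‖∑ i ∈ J, χ i z‖ ∂μ := by
  refine ContinuousLinearMap.opNorm_le_bound _ (integral_nonneg fun _ => norm_nonneg _) ?_
  intro f
  rw [ContinuousMap.norm_le _ (mul_nonneg (integral_nonneg fun _ => norm_nonneg _)
    (norm_nonneg f))]
  intro w
  have e1 : fourierProj μ χ J f w = ∫ z, f z * star (∑ i ∈ J, χ i (w⁻¹ * z)) ∂μ := by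
    rw [fourierProj_apply, ContinuousMap.sum_apply]
    have : ∀ z, f z * star (∑ i ∈ J, χ i (w⁻¹ * z))
        = ∑ i ∈ J, (f z * star (χ i z)) * χ i w := by
      intro z
      rw [star_sum, Finset.mul_sum]
      refine Finset.sum_congr rfl fun i _ => ?_
      rw [h.mul, h.inv, star_mul, star_star]; ring
    simp_rw [this]
    rw [integral_finsetSum _ (fun i _ => integrable_of_continuous μ (by fun_prop))]
    refine Finset.sum_congr rfl fun i _ => ?_
    rw [integral_mul_const, ← fourierCoef_apply]
    simp
  rw [e1]
  calc ‖∫ z, f z * star (∑ i ∈ J, χ i (w⁻¹ * z)) ∂μ‖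
      ≤ ∫ z, ‖f z * star (∑ i ∈ J, χ i (w⁻¹ * z))‖ ∂μ := norm_integral_le_integral_norm _
    _ ≤ ∫ z, ‖f‖ * ‖∑ i ∈ J, χ i (w⁻¹ * z)‖ ∂μ := by
        refine integral_mono (integrable_of_continuous μ (by fun_prop))
          (integrable_of_continuous μ (by fun_prop)) fun z => ?_
        simp only [norm_mul, norm_star]
        gcongr
        exact f.norm_coe_le_norm z
    _ = (∫ z, ‖∑ i ∈ J, χ i z‖ ∂μ) * ‖f‖ := by
        rw [integral_const_mul, mul_comm,
          integral_mul_left_eq_self (μ := μ) (fun z => ‖∑ i ∈ J, χ i z‖) w⁻¹]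

/-- Averaging `T_a⁻¹ Q T_a` over the translations `T_a` turns any projection `Q` into the Fourier
projection.  Here this is evaluated at the identity of `G` only. -/
lemma IsCharFamily.norm_sum_fourierCoef_le {χ : ι → C(G, ℂ)} (h : IsCharFamily χ) (J : Finset ι)
    (Q : C(G, ℂ) →L[ℂ] C(G, ℂ)) (hQ : ∀ f, Q f ∈ Submodule.span ℂ (χ '' ↑J))
    (hQ' : ∀ f ∈ Submodule.span ℂ (χ '' ↑J), Q f = f) (f : C(G, ℂ)) :
    ‖∑ i ∈ J, fourierCoef μ (χ i) f‖ ≤ ‖Q‖ * ‖f‖ := by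
  -- the translates `T a : z ↦ f (a z)`
  let T : C(G, C(G, ℂ)) := ContinuousMap.curry ⟨fun p : G × G => f (p.1 * p.2), by fun_prop⟩
  have hT : ∀ a z, T a z = f (a * z) := fun a z => rfl
  have hTn : ∀ a, ‖T a‖ ≤ ‖f‖ := fun a => by
    rw [ContinuousMap.norm_le _ (norm_nonneg f)]
    intro z
    exact f.norm_coe_le_norm _
  have hTc : Continuous fun a => T a := T.continuous
  -- the `χ i`-component of the translation orbit of `f`
  have comp : ∀ i, ∫ a, star (χ i a) • T a ∂μ = fourierCoef μ (χ i) f • χ i := by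
    intro i
    ext z
    have hint : Integrable (fun a => star (χ i a) • T a) μ :=
      integrable_of_continuous μ (by fun_prop)
    have e := (ContinuousMap.evalCLM ℂ z).integral_comp_comm hint
    have e0 : (∫ a, star (χ i a) • T a ∂μ) z
        = (ContinuousMap.evalCLM ℂ z) (∫ a, star (χ i a) • T a ∂μ) := rfl
    rw [e0, ← e]
    have e2 : ∀ a, (ContinuousMap.evalCLM ℂ z) (star (χ i a) • T a)
        = (f (z * a) * star (χ i (z * a))) * χ i z := by
      intro a
      have e3 : (ContinuousMap.evalCLM ℂ z) (star (χ i a) • T a) = star (χ i a) * f (a * z) := rfl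
      rw [e3, h.mul, star_mul, mul_comm a z]
      calc star (χ i a) * f (z * a)
          = f (z * a) * star (χ i a) * (χ i z * star (χ i z)) := by rw [h.mul_conj]; ring
        _ = _ := by ring
    simp_rw [e2]
    rw [integral_mul_const,
      integral_mul_left_eq_self (μ := μ) (fun a => f a * star (χ i a)) z]
    rfl
  have key : ∫ a, ∑ i ∈ J, star (χ i a) * fourierCoef μ (χ i) (Q (T a)) ∂μ
      = ∑ i ∈ J, fourierCoef μ (χ i) f := by
    rw [integral_finsetSum _ (fun i _ => integrable_of_continuous μ (by fun_prop))]
    refine Finset.sum_congr rfl fun i hi => ?_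
    have e := ((fourierCoef μ (χ i)).comp Q).integral_comp_comm
      (φ := fun a => star (χ i a) • T a) (μ := μ) (integrable_of_continuous μ (by fun_prop))
    rw [comp] at e
    simp only [map_smul, ContinuousLinearMap.comp_apply, smul_eq_mul] at e
    rw [e, hQ' _ (Submodule.subset_span ⟨i, hi, rfl⟩), h.fourierCoef_self, mul_one]
  rw [← key]
  have hb := norm_integral_le_of_norm_le_const (μ := μ)
    (f := fun a => ∑ i ∈ J, star (χ i a) * fourierCoef μ (χ i) (Q (T a)))
    (C := ‖Q‖ * ‖f‖) (Filter.Eventually.of_forall fun a => ?_)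
  · simpa using hb
  · have e4 : ∑ i ∈ J, star (χ i a) * fourierCoef μ (χ i) (Q (T a)) = Q (T a) a⁻¹ := by
      conv_rhs => rw [← h.fourierProj_eq (μ := μ) J (hQ (T a)), fourierProj_apply]
      rw [ContinuousMap.sum_apply]
      refine Finset.sum_congr rfl fun i _ => ?_
      rw [← h.inv]
      simp [mul_comm]
    rw [e4]
    calc ‖Q (T a) a⁻¹‖ ≤ ‖Q (T a)‖ := ContinuousMap.norm_coe_le_norm _ _
      _ ≤ ‖Q‖ * ‖T a‖ := Q.le_opNorm _
      _ ≤ ‖Q‖ * ‖f‖ := by gcongr; exact hTn a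

/-- The lower bound: test the previous inequality on `D / (‖D‖ + ε)`, a continuous approximation
of the sign of the kernel `D = ∑ i ∈ J, χ i`. -/
lemma IsCharFamily.le_norm_proj {χ : ι → C(G, ℂ)} (h : IsCharFamily χ) (J : Finset ι)
    (Q : C(G, ℂ) →L[ℂ] C(G, ℂ)) (hQ : ∀ f, Q f ∈ Submodule.span ℂ (χ '' ↑J))
    (hQ' : ∀ f ∈ Submodule.span ℂ (χ '' ↑J), Q f = f) :
    ∫ z, ‖∑ i ∈ J, χ i z‖ ∂μ ≤ ‖Q‖ := by
  refine le_of_forall_pos_le_add fun ε hε => ?_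
  set D : G → ℂ := fun z => ∑ i ∈ J, χ i z with hD
  have hDc : Continuous D := by fun_prop
  have hpos : ∀ z, 0 < ‖D z‖ + ε := fun z => by positivity
  let f : C(G, ℂ) := ⟨fun z => D z * (((‖D z‖ + ε)⁻¹ : ℝ) : ℂ),
    hDc.mul (Complex.continuous_ofReal.comp
      ((hDc.norm.add continuous_const).inv₀ fun z => (hpos z).ne'))⟩
  have hf : ∀ z, f z = D z * (((‖D z‖ + ε)⁻¹ : ℝ) : ℂ) := fun z => rfl
  have hfn : ‖f‖ ≤ 1 := by
    rw [ContinuousMap.norm_le _ zero_le_one]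
    intro z
    rw [hf, norm_mul, Complex.norm_real, Real.norm_of_nonneg (inv_nonneg.2 (hpos z).le),
      ← div_eq_mul_inv, div_le_one (hpos z)]
    linarith
  have hsum : ∑ i ∈ J, fourierCoef μ (χ i) f
      = ((∫ z, ‖D z‖ ^ 2 * (‖D z‖ + ε)⁻¹ ∂μ : ℝ) : ℂ) := by
    simp_rw [fourierCoef_apply]
    rw [← integral_finsetSum _ (fun i _ => integrable_of_continuous μ (by fun_prop)),
      ← integral_complex_ofReal]
    congr 1
    funext z
    rw [← Finset.mul_sum, ← star_sum, hf]
    have := Complex.mul_conj' (D z)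
    calc D z * (((‖D z‖ + ε)⁻¹ : ℝ) : ℂ) * star (∑ i ∈ J, χ i z)
        = (D z * (starRingEnd ℂ) (D z)) * (((‖D z‖ + ε)⁻¹ : ℝ) : ℂ) := by
          simp only [hD, starRingEnd_apply]; ring
      _ = _ := by rw [this]; push_cast; ring
  have hle := h.norm_sum_fourierCoef_le (μ := μ) J Q hQ hQ' f
  rw [hsum, Complex.norm_real] at hle
  have hc : Continuous fun z => ‖D z‖ ^ 2 * (‖D z‖ + ε)⁻¹ :=
    (hDc.norm.pow 2).mul ((hDc.norm.add continuous_const).inv₀ fun z => (hpos z).ne')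
  have hI : ∫ z, ‖D z‖ ∂μ ≤ ∫ z, (‖D z‖ ^ 2 * (‖D z‖ + ε)⁻¹ + ε) ∂μ := by
    refine integral_mono (integrable_of_continuous μ hDc.norm)
      (integrable_of_continuous μ (hc.add continuous_const)) fun z => ?_
    have := hpos z
    have e : ‖D z‖ ^ 2 * (‖D z‖ + ε)⁻¹ + ε - ‖D z‖ = ε ^ 2 * (‖D z‖ + ε)⁻¹ := by
      field_simp; ring
    have e' : 0 ≤ ε ^ 2 * (‖D z‖ + ε)⁻¹ := by positivity
    simp only
    linarith
  rw [integral_add (integrable_of_continuous μ hc) (integrable_const _)] at hI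
  simp only [integral_const, probReal_univ, one_smul] at hI
  have := le_abs_self (∫ z, ‖D z‖ ^ 2 * (‖D z‖ + ε)⁻¹ ∂μ)
  rw [Real.norm_eq_abs] at hle
  have h5 : ‖Q‖ * ‖f‖ ≤ ‖Q‖ := mul_le_of_le_one_right (norm_nonneg _) hfn
  linarith

lemma IsCharFamily.sInf_norm_proj {χ : ι → C(G, ℂ)} (h : IsCharFamily χ) (J : Finset ι) :
    sInf {r : ℝ | ∃ Q : C(G, ℂ) →L[ℂ] C(G, ℂ),
        (∀ f, Q f ∈ Submodule.span ℂ (χ '' ↑J)) ∧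
        (∀ f ∈ Submodule.span ℂ (χ '' ↑J), Q f = f) ∧ ‖Q‖ = r}
      = ∫ z, ‖∑ i ∈ J, χ i z‖ ∂μ := by
  have hmem : ‖fourierProj μ χ J‖ ∈ {r : ℝ | ∃ Q : C(G, ℂ) →L[ℂ] C(G, ℂ),
        (∀ f, Q f ∈ Submodule.span ℂ (χ '' ↑J)) ∧
        (∀ f ∈ Submodule.span ℂ (χ '' ↑J), Q f = f) ∧ ‖Q‖ = r} :=
    ⟨_, fourierProj_mem χ J, fun f hf => h.fourierProj_eq J hf, rfl⟩
  apply le_antisymm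
  · refine (csInf_le ⟨0, ?_⟩ hmem).trans (h.norm_fourierProj_le J)
    rintro _ ⟨Q, -, -, rfl⟩
    exact norm_nonneg Q
  · refine le_csInf ⟨_, hmem⟩ ?_
    rintro _ ⟨Q, hQ, hQ', rfl⟩
    exact h.le_norm_proj J Q hQ hQ'

end CharacterFamilies

/-! ### Weissler's inequality on the circle -/

section Circle

open Polynomial

/-- The coordinate function `z ↦ z` of the circle. -/
noncomputable def circleId : C(Circle, ℂ) := ⟨fun z => (z : ℂ), continuous_subtype_val⟩

@[simp] lemma circleId_apply (z : Circle) : circleId z = (z : ℂ) := rfl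

lemma exists_circle_pow_ne {k l : ℕ} (hkl : k ≠ l) : ∃ w : Circle, (w : ℂ) ^ k ≠ (w : ℂ) ^ l := by
  wlog h : l < k generalizing k l
  · obtain ⟨w, hw⟩ := this hkl.symm (by omega)
    exact ⟨w, hw.symm⟩
  obtain ⟨d, rfl⟩ := Nat.exists_eq_add_of_lt h
  -- a primitive `2 (d + 1)`-th root of unity
  refine ⟨Circle.exp (Real.pi / ((d : ℝ) + 1)), fun he => ?_⟩
  have hne : ((Circle.exp (Real.pi / ((d : ℝ) + 1)) : Circle) : ℂ) ^ l ≠ 0 :=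
    pow_ne_zero _ (Circle.coe_ne_zero _)
  have h1 : ((Circle.exp (Real.pi / ((d : ℝ) + 1)) : Circle) : ℂ) ^ (d + 1) = 1 := by
    refine mul_left_cancel₀ hne ?_
    rw [mul_one, ← pow_add, ← add_assoc]
    exact he
  rw [Circle.coe_exp, ← Complex.exp_nat_mul] at h1
  have h2 : ((d + 1 : ℕ) : ℂ) * (((Real.pi / ((d : ℝ) + 1) : ℝ) : ℂ) * Complex.I)
      = Real.pi * Complex.I := by
    have : (d : ℂ) + 1 ≠ 0 := by exact_mod_cast Nat.succ_ne_zero d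
    push_cast
    field_simp
  rw [h2, Complex.exp_pi_mul_I] at h1
  norm_num at h1

lemma isCharFamily_circle : IsCharFamily (fun k : ℕ => circleId ^ k) where
  mul k x y := by simp [mul_pow]
  norm k x := by simp [Circle.norm_coe]
  distinct k l hkl := by
    obtain ⟨w, hw⟩ := exists_circle_pow_ne hkl
    exact ⟨w, by simpa using hw⟩

lemma isCharFamily_torus (n : ℕ) : IsCharFamily (torusMonomial n) where
  mul α x y := by simp [torusMonomial, mul_pow, Finset.prod_mul_distrib]
  norm α x := by simp [torusMonomial, Circle.norm_coe]
  distinct α β h := by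
    obtain ⟨j, hj⟩ := Function.ne_iff.1 h
    obtain ⟨w, hw⟩ := exists_circle_pow_ne hj
    refine ⟨Pi.mulSingle j w, ?_⟩
    have key : ∀ γ : Fin n → ℕ, torusMonomial n γ (Pi.mulSingle j w) = (w : ℂ) ^ γ j := by
      intro γ
      change ∏ i, (((Pi.mulSingle j w : Fin n → Circle) i ^ γ i : Circle) : ℂ) = _
      rw [Finset.prod_eq_single j]
      · simp
      · intro i _ hij
        simp [Pi.mulSingle_eq_of_ne hij]
      · simp
    rw [key, key]
    exact hw

/-- If `‖x‖ ≤ 1` then `1 - x` is a limit of squares of elements of any subalgebra containing `x`.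
The approximate roots are `1 - q k` with `q (k + 1) = (x + q k ^ 2) / 2`; the increments of `q` are
dominated by those of the same recursion started from the number `1`. -/
lemma one_sub_mem_closure_sq (B : Subalgebra ℂ C(Circle, ℂ)) {x : C(Circle, ℂ)} (hx : x ∈ B)
    (hx1 : ‖x‖ ≤ 1) : 1 - x ∈ closure {y | ∃ p ∈ B, p ^ 2 = y} := by
  obtain ⟨q, q0, qs⟩ : ∃ q : ℕ → C(Circle, ℂ), q 0 = 0 ∧
      ∀ k, q (k + 1) = (1 / 2 : ℂ) • (x + q k ^ 2) :=
    ⟨fun k => Nat.rec 0 (fun _ y => (1 / 2 : ℂ) • (x + y ^ 2)) k, rfl, fun _ => rfl⟩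
  obtain ⟨r, r0, rs⟩ : ∃ r : ℕ → ℝ, r 0 = 0 ∧ ∀ k, r (k + 1) = (1 / 2 : ℝ) * (1 + r k ^ 2) :=
    ⟨fun k => Nat.rec 0 (fun _ y => (1 / 2 : ℝ) * (1 + y ^ 2)) k, rfl, fun _ => rfl⟩
  have half : ‖(1 / 2 : ℂ)‖ = 1 / 2 := by norm_num
  have qB : ∀ k, q k ∈ B := by
    intro k
    induction k with
    | zero => rw [q0]; exact B.zero_mem
    | succ k ih => rw [qs]; exact B.smul_mem (B.add_mem hx (B.pow_mem ih 2)) _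
  have rb : ∀ k, 0 ≤ r k ∧ r k ≤ 1 := by
    intro k
    induction k with
    | zero => rw [r0]; norm_num
    | succ k ih => rw [rs]; constructor <;> nlinarith [ih.1, ih.2]
  have rmono : Monotone r := monotone_nat_of_le_succ fun k => by
    rw [rs]; nlinarith [sq_nonneg (r k - 1)]
  have qr : ∀ k, ‖q k‖ ≤ r k := by
    intro k
    induction k with
    | zero => rw [q0, r0, norm_zero]
    | succ k ih =>
      rw [qs, rs, norm_smul, half]
      gcongr
      calc ‖x + q k ^ 2‖ ≤ ‖x‖ + ‖q k ^ 2‖ := norm_add_le _ _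
        _ ≤ 1 + ‖q k‖ ^ 2 := add_le_add hx1 (norm_pow_le _ 2)
        _ ≤ 1 + r k ^ 2 := by gcongr
  have dqr : ∀ k, ‖q (k + 1) - q k‖ ≤ r (k + 1) - r k := by
    intro k
    induction k with
    | zero =>
      rw [qs, rs, q0, r0, norm_sub_rev]
      simp only [ne_eq, OfNat.ofNat_ne_zero, not_false_eq_true, zero_pow, add_zero, zero_sub,
        norm_neg, norm_smul, half]
      linarith
    | succ k ih =>
      have e : q (k + 1 + 1) - q (k + 1)
          = (1 / 2 : ℂ) • ((q (k + 1) - q k) * (q (k + 1) + q k)) := by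
        rw [qs (k + 1)]
        nth_rewrite 2 [qs k]
        rw [← smul_sub]
        congr 1
        ring
      have e' : r (k + 1 + 1) - r (k + 1)
          = (1 / 2 : ℝ) * ((r (k + 1) - r k) * (r (k + 1) + r k)) := by
        rw [rs (k + 1)]
        nth_rewrite 2 [rs k]
        ring
      rw [e, e', norm_smul, half]
      gcongr
      refine (norm_mul_le _ _).trans ?_
      have h3 : ‖q (k + 1) + q k‖ ≤ r (k + 1) + r k :=
        (norm_add_le _ _).trans (add_le_add (qr _) (qr _))
      exact mul_le_mul ih h3 (norm_nonneg _) ((norm_nonneg _).trans ih)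
  have rlim : Filter.Tendsto (fun k => r (k + 1) - r k) Filter.atTop (nhds 0) := by
    have hl := tendsto_atTop_ciSup rmono ⟨1, by rintro _ ⟨k, rfl⟩; exact (rb k).2⟩
    have := (hl.comp (Filter.tendsto_add_atTop_nat 1)).sub hl
    simpa using this
  have dlim : Filter.Tendsto (fun k => q (k + 1) - q k) Filter.atTop (nhds 0) :=
    squeeze_zero_norm dqr rlim
  refine mem_closure_of_tendsto (f := fun k => (1 - q k) ^ 2) (b := Filter.atTop) ?_
    (Filter.Eventually.of_forall fun k => ⟨1 - q k, B.sub_mem B.one_mem (qB k), rfl⟩)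
  have e : ∀ k, (1 - q k) ^ 2 = (1 - x) + (2 : ℂ) • (q (k + 1) - q k) := by
    intro k
    rw [qs, smul_sub, smul_smul]
    norm_num
    rw [two_smul]
    ring
  simp_rw [e]
  simpa using (dlim.const_smul (2 : ℂ)).const_add (1 - x)

/-- Restrictions to the circle of squares of polynomials, as a submonoid of `C(Circle, ℂ)`. -/
noncomputable def polySquares : Submonoid C(Circle, ℂ) :=
  (aeval (R := ℂ) circleId).range.toSubmonoid.map (powMonoidHom 2)

lemma one_sub_smul_mem (w : ℂ) (hw : ‖w‖ ≤ 1) :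
    1 - w • circleId ∈ polySquares.topologicalClosure := by
  have h := one_sub_mem_closure_sq (aeval (R := ℂ) circleId).range (x := w • circleId)
    ⟨C w * X, by simp [Algebra.smul_def]⟩ (by
      rw [ContinuousMap.norm_le _ zero_le_one]
      intro z
      simpa [Circle.norm_coe] using hw)
  exact h

lemma const_mem (c : ℂ) : aeval circleId (C c) ∈ polySquares.topologicalClosure := by
  obtain ⟨s, hs⟩ := IsAlgClosed.exists_pow_nat_eq c two_pos
  refine Submonoid.le_topologicalClosure _ ⟨aeval circleId (C s), ⟨C s, rfl⟩, ?_⟩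
  simp [hs, ← map_pow]

variable [MeasurableSpace Circle] [BorelSpace Circle]

lemma fourierCoef_aeval (ν : Measure Circle) [IsProbabilityMeasure ν] [ν.IsMulLeftInvariant]
    (f : ℂ[X]) (k : ℕ) : fourierCoef ν (circleId ^ k) (aeval circleId f) = f.coeff k := by
  rw [aeval_eq_sum_range]
  have := isCharFamily_circle.fourierCoef_sum (μ := ν) (Finset.range (f.natDegree + 1)) f.coeff k
  rw [this]
  split_ifs with h
  · rfl
  · rw [Finset.mem_range, not_lt] at h
    exact (coeff_eq_zero_of_natDegree_lt (by omega)).symm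

lemma bessel (ν : Measure Circle) [IsProbabilityMeasure ν] [ν.IsMulLeftInvariant]
    (f : ℂ[X]) (N : ℕ) :
    ∑ k ∈ Finset.range N, ‖f.coeff k‖ ^ 2 ≤ ∫ z, ‖aeval circleId f z‖ ^ 2 ∂ν := by
  have hlt : f.natDegree < max N (f.natDegree + 1) := by omega
  rw [aeval_eq_sum_range' hlt, isCharFamily_circle.parseval]
  exact Finset.sum_le_sum_of_subset_of_nonneg
    (Finset.range_subset_range.2 (le_max_left _ _)) fun _ _ _ => by positivity

/-- Cauchy–Schwarz for the coefficients of a square; the weight `2⁻ᵏ ≤ 1 / (k + 1)` compensates the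
number of terms of the convolution. -/
lemma weighted_coeff_sq_le (g : ℂ[X]) (N : ℕ) :
    ∑ k ∈ Finset.range N, (1 / 2 : ℝ) ^ k * ‖(g ^ 2).coeff k‖ ^ 2
      ≤ (∑ k ∈ Finset.range N, ‖g.coeff k‖ ^ 2) ^ 2 := by
  set F : ℕ × ℕ → ℝ := fun p => ‖g.coeff p.1‖ ^ 2 * ‖g.coeff p.2‖ ^ 2 with hF
  have hF0 : ∀ p, 0 ≤ F p := fun p => by positivity
  have step : ∀ k, (1 / 2 : ℝ) ^ k * ‖(g ^ 2).coeff k‖ ^ 2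
      ≤ ∑ p ∈ Finset.HasAntidiagonal.antidiagonal k, F p := by
    intro k
    have h1 : ‖(g ^ 2).coeff k‖ ^ 2 ≤ ((k : ℝ) + 1) * ∑ p ∈ Finset.HasAntidiagonal.antidiagonal k, F p := by
      rw [sq g, coeff_mul]
      calc ‖∑ p ∈ Finset.HasAntidiagonal.antidiagonal k, g.coeff p.1 * g.coeff p.2‖ ^ 2
          ≤ (∑ p ∈ Finset.HasAntidiagonal.antidiagonal k, ‖g.coeff p.1 * g.coeff p.2‖) ^ 2 := by
            gcongr; exact norm_sum_le _ _
        _ ≤ _ := sq_sum_le_card_mul_sum_sq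
        _ = _ := by simp [hF, mul_pow]
    have h2 : (1 / 2 : ℝ) ^ k * ((k : ℝ) + 1) ≤ 1 := by
      have : (k : ℝ) + 1 ≤ 2 ^ k := by exact_mod_cast (Nat.lt_two_pow_self (n := k))
      rw [one_div, inv_pow, inv_mul_le_iff₀ (by positivity)]
      linarith
    calc (1 / 2 : ℝ) ^ k * ‖(g ^ 2).coeff k‖ ^ 2
        ≤ (1 / 2 : ℝ) ^ k * (((k : ℝ) + 1) * ∑ p ∈ Finset.HasAntidiagonal.antidiagonal k, F p) := by gcongr
      _ = ((1 / 2 : ℝ) ^ k * ((k : ℝ) + 1)) * ∑ p ∈ Finset.HasAntidiagonal.antidiagonal k, F p := by ring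
      _ ≤ _ := mul_le_of_le_one_left (Finset.sum_nonneg fun p _ => hF0 p) h2
  refine (Finset.sum_le_sum fun k _ => step k).trans ?_
  rw [sq (∑ k ∈ Finset.range N, _), Finset.sum_mul_sum, ← Finset.sum_product',
    ← Finset.sum_biUnion]
  · refine Finset.sum_le_sum_of_subset_of_nonneg ?_ fun p _ _ => hF0 p
    intro p hp
    simp only [Finset.mem_biUnion, Finset.mem_range, Finset.HasAntidiagonal.mem_antidiagonal,
      Finset.mem_product] at hp ⊢
    omega
  · intro k _ l _ hkl
    rw [Function.onFun, Finset.disjoint_left]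
    intro p hp hq
    rw [Finset.HasAntidiagonal.mem_antidiagonal] at hp hq
    exact hkl (hp.symm.trans hq)

/-- Reflecting a zero `ζ` of the closed disc across the circle does not decrease any partial
sum `∑ 2⁻ᵏ ‖aₖ‖²`, because the weights decrease. -/
lemma weighted_coeff_reflect (u : ℂ[X]) {ζ : ℂ} (hζ : ‖ζ‖ ≤ 1) (N : ℕ) :
    ∑ k ∈ Finset.range N, (1 / 2 : ℝ) ^ k * ‖((X - C ζ) * u).coeff k‖ ^ 2
      ≤ ∑ k ∈ Finset.range N, (1 / 2 : ℝ) ^ k * ‖((1 - C (star ζ) * X) * u).coeff k‖ ^ 2 := by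
  have hz : 0 ≤ 1 - ‖ζ‖ ^ 2 := by nlinarith [norm_nonneg ζ]
  have alg : ∀ a b : ℂ, ‖b - star ζ * a‖ ^ 2 - ‖a - ζ * b‖ ^ 2
      = (1 - ‖ζ‖ ^ 2) * (‖b‖ ^ 2 - ‖a‖ ^ 2) := by
    intro a b
    simp only [← Complex.normSq_eq_norm_sq, Complex.normSq_apply]
    simp
    ring
  -- summation by parts, kept as a strengthened induction hypothesis
  have key : ∀ N : ℕ, (1 - ‖ζ‖ ^ 2) * ((1 / 2 : ℝ) ^ N * ‖u.coeff N‖ ^ 2)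
      ≤ ∑ k ∈ Finset.range (N + 1), (1 / 2 : ℝ) ^ k * (‖((1 - C (star ζ) * X) * u).coeff k‖ ^ 2
        - ‖((X - C ζ) * u).coeff k‖ ^ 2) := by
    intro N
    induction N with
    | zero =>
      have := alg 0 (u.coeff 0)
      simp [sub_mul, mul_coeff_zero] at this ⊢
      nlinarith
    | succ N ih =>
      rw [Finset.sum_range_succ]
      have e1 : ((1 - C (star ζ) * X) * u).coeff (N + 1) = u.coeff (N + 1) - star ζ * u.coeff N := by
        rw [sub_mul, one_mul, mul_assoc, coeff_sub, coeff_C_mul, coeff_X_mul]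
      have e2 : ((X - C ζ) * u).coeff (N + 1) = u.coeff N - ζ * u.coeff (N + 1) := by
        rw [sub_mul, coeff_sub, coeff_C_mul, coeff_X_mul]
      rw [e1, e2, alg, pow_succ (1 / 2 : ℝ) N]
      have : 0 ≤ (1 - ‖ζ‖ ^ 2) * ((1 / 2 : ℝ) ^ N * ‖u.coeff N‖ ^ 2) := by positivity
      nlinarith
  rw [← sub_nonneg, ← Finset.sum_sub_distrib]
  simp_rw [← mul_sub]
  cases N with
  | zero => simp
  | succ N =>
    refine le_trans ?_ (key N)
    positivity

lemma continuous_integral_norm (ν : Measure Circle) [IsProbabilityMeasure ν] :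
    Continuous fun F : C(Circle, ℂ) => ∫ z, ‖F z‖ ∂ν := by
  refine (LipschitzWith.of_dist_le_mul (K := 1) fun F H => ?_).continuous
  rw [Real.dist_eq, ← integral_sub (integrable_of_continuous ν (by fun_prop))
    (integrable_of_continuous ν (by fun_prop)), ← Real.norm_eq_abs]
  have := norm_integral_le_of_norm_le_const (μ := ν) (f := fun z => ‖F z‖ - ‖H z‖)
    (C := dist F H) (Filter.Eventually.of_forall fun z => by
      rw [Real.norm_eq_abs]
      refine (abs_norm_sub_norm_le _ _).trans ?_
      rw [← dist_eq_norm]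
      exact ContinuousMap.dist_apply_le_dist z)
  simpa using this

/-- The one-variable inequality for uniform limits of squares of polynomials. -/
lemma weissler_of_mem (ν : Measure Circle) [IsProbabilityMeasure ν] [ν.IsMulLeftInvariant]
    (N : ℕ) {F : C(Circle, ℂ)} (hF : F ∈ polySquares.topologicalClosure) :
    ∑ k ∈ Finset.range N, (1 / 2 : ℝ) ^ k * ‖fourierCoef ν (circleId ^ k) F‖ ^ 2
      ≤ (∫ z, ‖F z‖ ∂ν) ^ 2 := by
  have hcl : IsClosed {F : C(Circle, ℂ) |
      ∑ k ∈ Finset.range N, (1 / 2 : ℝ) ^ k * ‖fourierCoef ν (circleId ^ k) F‖ ^ 2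
        ≤ (∫ z, ‖F z‖ ∂ν) ^ 2} :=
    isClosed_le (by fun_prop) ((continuous_integral_norm ν).pow 2)
  refine closure_minimal ?_ hcl hF
  rintro _ ⟨_, ⟨g, rfl⟩, rfl⟩
  have e : (powMonoidHom 2) ((aeval (R := ℂ) circleId) g) = aeval circleId (g ^ 2) := by
    simp
  change ∑ k ∈ Finset.range N, (1 / 2 : ℝ) ^ k *
    ‖fourierCoef ν (circleId ^ k) ((powMonoidHom 2) ((aeval (R := ℂ) circleId) g))‖ ^ 2
      ≤ (∫ z, ‖((powMonoidHom 2) ((aeval (R := ℂ) circleId) g)) z‖ ∂ν) ^ 2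
  rw [e]
  simp_rw [fourierCoef_aeval]
  refine (weighted_coeff_sq_le g N).trans ?_
  have e2 : ∀ z, ‖aeval circleId (g ^ 2) z‖ = ‖aeval circleId g z‖ ^ 2 := by
    intro z; simp
  simp_rw [e2]
  gcongr
  exact bessel ν g N

/-- The one-variable inequality for a polynomial with prescribed roots. Zeros inside the disc are
reflected one at a time; the other ones are absorbed in `u`. -/
lemma weissler_roots (ν : Measure Circle) [IsProbabilityMeasure ν] [ν.IsMulLeftInvariant]
    (N : ℕ) (s : Multiset ℂ) : ∀ u : ℂ[X], aeval circleId u ∈ polySquares.topologicalClosure →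
    ∑ k ∈ Finset.range N, (1 / 2 : ℝ) ^ k * ‖(u * (s.map fun ζ => X - C ζ).prod).coeff k‖ ^ 2
      ≤ (∫ z, ‖aeval circleId (u * (s.map fun ζ => X - C ζ).prod) z‖ ∂ν) ^ 2 := by
  induction s using Multiset.induction with
  | empty =>
    intro u hu
    have := weissler_of_mem ν N hu
    simp_rw [fourierCoef_aeval] at this
    simpa using this
  | cons ζ s ih =>
    intro u hu
    rw [Multiset.map_cons, Multiset.prod_cons]
    set R := (s.map fun ζ => X - C ζ).prod with hR
    rcases le_total 1 ‖ζ‖ with h1 | h1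
    · rw [← mul_assoc]
      refine ih (u * (X - C ζ)) ?_
      have hne : ζ ≠ 0 := by rw [← norm_pos_iff]; linarith
      have e : aeval circleId (u * (X - C ζ))
          = aeval circleId u * (aeval circleId (C (-ζ)) * (1 - ζ⁻¹ • circleId)) := by
        have : X - C ζ = C (-ζ) * (1 - C ζ⁻¹ * X) := by
          rw [mul_sub, ← mul_assoc, ← C_mul]
          simp [hne]
          ring
        rw [this]
        simp [Algebra.smul_def]
      rw [e]
      exact mul_mem hu (mul_mem (const_mem _) (one_sub_smul_mem _ (by
        rw [norm_inv]; exact inv_le_one_of_one_le₀ h1)))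
    · have h2 := ih (u * (1 - C (star ζ) * X)) (by
        rw [map_mul]
        refine mul_mem hu ?_
        have := one_sub_smul_mem (star ζ) (by rwa [norm_star])
        simpa [Algebra.smul_def] using this)
      have h3 := weighted_coeff_reflect (u * R) h1 N
      have c1 : u * ((X - C ζ) * R) = (X - C ζ) * (u * R) := by ring
      have c2 : u * (1 - C (star ζ) * X) * R = (1 - C (star ζ) * X) * (u * R) := by ring
      rw [c2] at h2
      rw [c1]
      refine h3.trans (h2.trans_eq ?_)
      congr 2
      funext z
      rw [map_mul _ _ (u * R), map_mul _ _ (u * R), ContinuousMap.mul_apply,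
        ContinuousMap.mul_apply, norm_mul, norm_mul]
      congr 1
      have hz : (z : ℂ) * star (z : ℂ) = 1 := by
        have := Complex.mul_conj' (z : ℂ)
        rw [Circle.norm_coe] at this
        simpa using this
      calc ‖aeval circleId (1 - C (star ζ) * X) z‖ = ‖1 - star ζ * (z : ℂ)‖ := by simp
        _ = ‖star (1 - star ζ * (z : ℂ))‖ := (norm_star _).symm
        _ = ‖(z : ℂ)‖ * ‖star (1 - star ζ * (z : ℂ))‖ := by rw [Circle.norm_coe, one_mul]
        _ = ‖(z : ℂ) - ζ * ((z : ℂ) * star (z : ℂ))‖ := by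
            rw [← norm_mul]
            congr 1
            rw [star_sub, star_mul, star_star, star_one]
            ring
        _ = ‖aeval circleId (X - C ζ) z‖ := by rw [hz]; simp

/-- Weissler's inequality in one variable: dilation by `1 / √2` maps `H¹` contractively
to `H²`. -/
lemma weissler_one (ν : Measure Circle) [IsProbabilityMeasure ν] [ν.IsMulLeftInvariant]
    {d : ℕ} (a : Fin d → ℂ) :
    ∑ k : Fin d, (1 / 2 : ℝ) ^ (k : ℕ) * ‖a k‖ ^ 2
      ≤ (∫ z : Circle, ‖∑ k : Fin d, a k * (z : ℂ) ^ (k : ℕ)‖ ∂ν) ^ 2 := by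
  set f : ℂ[X] := ∑ k : Fin d, C (a k) * X ^ (k : ℕ) with hf
  have h := weissler_roots ν d f.roots (C f.leadingCoeff) (const_mem _)
  rw [← (IsAlgClosed.splits f).eq_prod_roots, Finset.sum_range] at h
  have hc : ∀ k : Fin d, f.coeff k = a k := by
    intro k
    rw [hf, finsetSum_coeff, Finset.sum_eq_single k]
    · simp
    · intro j _ hj
      rw [coeff_C_mul_X_pow, if_neg]
      exact fun hh => hj (Fin.ext hh.symm)
    · simp
  have he : ∀ z : Circle, aeval circleId f z = ∑ k : Fin d, a k * (z : ℂ) ^ (k : ℕ) := by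
    intro z
    rw [hf, map_sum, ContinuousMap.sum_apply]
    simp
  simp_rw [hc, he] at h
  exact h

end Circle

/-! ### Weissler's inequality on the torus -/

section Torus

variable [MeasurableSpace Circle] [BorelSpace Circle]

/-- Weissler's inequality on the polytorus, by induction on the number of variables: the one-variable
inequality in `z 0`, Minkowski's integral inequality, and the induction hypothesis in the
remaining variables. -/
lemma weissler_pi (ν : Measure Circle) [IsProbabilityMeasure ν] [ν.IsMulLeftInvariant] (d : ℕ) :
    ∀ (n : ℕ) (c : (Fin n → Fin d) → ℂ),
    ∑ α, (1 / 2 : ℝ) ^ (∑ j, (α j : ℕ)) * ‖c α‖ ^ 2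
      ≤ (∫ z : Fin n → Circle, ‖∑ α, c α * ∏ j, (z j : ℂ) ^ (α j : ℕ)‖
          ∂(Measure.pi fun _ => ν)) ^ 2 := by
  intro n
  induction n with
  | zero =>
    intro c
    simp
  | succ n ih =>
    intro c
    -- the coefficients of the powers of `z 0`, as polynomials in the other variables
    let P : Fin d → (Fin n → Circle) → ℂ := fun k z =>
      ∑ β : Fin n → Fin d, c (Fin.cons k β) * ∏ j, (z j : ℂ) ^ (β j : ℕ)
    have hcoe : Continuous fun t : Circle => (t : ℂ) := continuous_subtype_val
    have hPc : ∀ k, Continuous (P k) := fun k => by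
      refine continuous_finsetSum _ fun β _ => continuous_const.mul ?_
      exact continuous_finsetProd _ fun j _ => (hcoe.comp (continuous_apply j)).pow _
    let H : Circle × (Fin n → Circle) → ℝ := fun p => ‖∑ k : Fin d, P k p.2 * (p.1 : ℂ) ^ (k : ℕ)‖
    have hHc : Continuous H := by
      refine (continuous_finsetSum _ fun k _ => ?_).norm
      exact ((hPc k).comp continuous_snd).mul ((hcoe.comp continuous_fst).pow _)
    have hsplit : ∫ z : Fin (n + 1) → Circle, ‖∑ α, c α * ∏ j, (z j : ℂ) ^ (α j : ℕ)‖
          ∂(Measure.pi fun _ => ν)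
        = ∫ z : Fin n → Circle, ∫ t : Circle, H (t, z) ∂ν ∂(Measure.pi fun _ => ν) := by
      rw [← integral_prod_symm H (integrable_of_continuous _ hHc)]
      have hmp := measurePreserving_piFinSuccAbove (fun _ : Fin (n + 1) => ν) 0
      rw [← hmp.integral_comp']
      congr 1
      funext z
      change _ = ‖∑ k : Fin d, P k (fun j => z (Fin.succAbove 0 j)) * (z 0 : ℂ) ^ (k : ℕ)‖
      congr 1
      rw [← (Fin.consEquiv fun _ => Fin d).sum_comp, Fintype.sum_prod_type]
      refine Finset.sum_congr rfl fun k _ => ?_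
      rw [Finset.sum_mul]
      refine Finset.sum_congr rfl fun β _ => ?_
      rw [Fin.prod_univ_succ]
      simp [Fin.consEquiv]
      ring
    -- the vector of weighted coefficients, whose integral Minkowski's inequality bounds
    let v : (Fin n → Circle) → EuclideanSpace ℝ (Fin d) := fun z =>
      WithLp.toLp 2 fun k => Real.sqrt ((1 / 2 : ℝ) ^ (k : ℕ)) * ‖P k z‖
    have hvc : Continuous v := by
      refine (PiLp.continuous_toLp 2 _).comp (continuous_pi fun k => ?_)
      exact continuous_const.mul (hPc k).norm
    have hw : ∀ k : Fin d, Real.sqrt ((1 / 2 : ℝ) ^ (k : ℕ)) ^ 2 = (1 / 2 : ℝ) ^ (k : ℕ) :=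
      fun k => Real.sq_sqrt (by positivity)
    have hvn : ∀ z, ‖v z‖ ≤ ∫ t : Circle, H (t, z) ∂ν := by
      intro z
      refine le_of_sq_le_sq ?_ (integral_nonneg fun t => norm_nonneg _)
      rw [EuclideanSpace.norm_sq_eq]
      refine le_trans (le_of_eq ?_) (weissler_one ν fun k => P k z)
      refine Finset.sum_congr rfl fun k _ => ?_
      simp only [v, Real.norm_eq_abs, sq_abs, mul_pow, hw]
    have hvi : ∀ k, (∫ z, v z ∂(Measure.pi fun _ => ν)) k
        = Real.sqrt ((1 / 2 : ℝ) ^ (k : ℕ)) * ∫ z, ‖P k z‖ ∂(Measure.pi fun _ => ν) := by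
      intro k
      have := (EuclideanSpace.proj k : EuclideanSpace ℝ (Fin d) →L[ℝ] ℝ).integral_comp_comm
        (integrable_of_continuous (Measure.pi fun _ : Fin n => ν) hvc)
      rw [← integral_const_mul]
      exact this.symm
    have hmink : ‖∫ z, v z ∂(Measure.pi fun _ => ν)‖
        ≤ ∫ z : Fin n → Circle, ∫ t : Circle, H (t, z) ∂ν ∂(Measure.pi fun _ => ν) :=
      (norm_integral_le_integral_norm _).trans
        (integral_mono (integrable_of_continuous _ hvc.norm)
          (integrable_of_continuous _ hHc).integral_prod_right hvn)
    rw [hsplit]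
    refine le_trans ?_ (pow_le_pow_left₀ (norm_nonneg _) hmink 2)
    rw [EuclideanSpace.norm_sq_eq, ← (Fin.consEquiv fun _ => Fin d).sum_comp,
      Fintype.sum_prod_type]
    refine Finset.sum_le_sum fun k _ => ?_
    rw [hvi, Real.norm_eq_abs, sq_abs, mul_pow, hw]
    refine le_trans (le_of_eq ?_)
      (mul_le_mul_of_nonneg_left (ih fun β => c (Fin.cons k β)) (by positivity))
    rw [Finset.mul_sum]
    refine Finset.sum_congr rfl fun β _ => ?_
    rw [Fin.sum_univ_succ]
    simp [Fin.consEquiv, pow_add]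
    ring

end Torus

/-- Weissler's inequality for `∑ α ∈ J, z ^ α`, when all degrees are at most `m`. -/
lemma weissler_torus (n : ℕ) (J : Finset (Fin n → ℕ))
    [inst : MeasurableSpace (Fin n → Circle)] [hB : BorelSpace (Fin n → Circle)]
    (μ : Measure (Fin n → Circle)) [μ.IsHaarMeasure] [IsProbabilityMeasure μ]
    (m : ℕ) (hm : ∀ α ∈ J, ∑ j, α j ≤ m) :
    (1 / 2 : ℝ) ^ m * J.card ≤ (∫ z, ‖∑ α ∈ J, torusMonomial n α z‖ ∂μ) ^ 2 := by
  classical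
  let : MeasurableSpace Circle := borel Circle
  have : BorelSpace Circle := ⟨rfl⟩
  obtain rfl : inst = MeasurableSpace.pi :=
    hB.measurable_eq.trans (@BorelSpace.measurable_eq _ _ MeasurableSpace.pi _).symm
  let ν : Measure Circle := Measure.haarMeasure ⊤
  have : IsProbabilityMeasure ν := ⟨Measure.haarMeasure_self⟩
  have hμ : μ = Measure.pi fun _ => ν := Measure.isHaarMeasure_eq_of_isProbabilityMeasure _ _
  -- all exponents occurring in `J` are at most `m`, so `J` embeds in the box `Fin n → Fin (m + 1)`
  let e : (Fin n → Fin (m + 1)) → (Fin n → ℕ) := fun α j => α j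
  have he : Function.Injective e := fun α β h => by
    funext j
    exact Fin.ext (congrFun h j)
  have hJ : ∀ {M : Type} [AddCommMonoid M] (F : (Fin n → ℕ) → M),
      ∑ α ∈ J, F α = ∑ α, if e α ∈ J then F (e α) else 0 := by
    intro M _ F
    rw [← Finset.sum_filter, ← Finset.sum_image (s := Finset.univ.filter fun α => e α ∈ J)
      (g := e) (f := F) (fun α _ β _ h => he h)]
    congr 1
    ext α
    simp only [Finset.mem_image, Finset.mem_filter, Finset.mem_univ, true_and]
    constructor
    · intro h
      have hb : ∀ j, α j < m + 1 := fun j =>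
        Nat.lt_succ_of_le ((Finset.single_le_sum (f := α) (fun _ _ => Nat.zero_le _)
          (Finset.mem_univ j)).trans (hm α h))
      exact ⟨fun j => ⟨α j, hb j⟩, h, rfl⟩
    · rintro ⟨β, hβ, rfl⟩
      exact hβ
  have key := weissler_pi ν (m + 1) n fun α => if e α ∈ J then 1 else 0
  have e1 : ∀ z : Fin n → Circle, ∑ α ∈ J, torusMonomial n α z
      = ∑ α : Fin n → Fin (m + 1), (if e α ∈ J then (1 : ℂ) else 0) * ∏ j, (z j : ℂ) ^ (α j : ℕ) := by
    intro z
    rw [hJ]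
    refine Finset.sum_congr rfl fun α _ => ?_
    split_ifs
    · simp [torusMonomial, e]
    · simp
  rw [hμ]
  simp_rw [e1]
  refine le_trans ?_ key
  calc (1 / 2 : ℝ) ^ m * J.card = ∑ α ∈ J, (1 / 2 : ℝ) ^ m := by simp [mul_comm]
    _ ≤ ∑ α ∈ J, (1 / 2 : ℝ) ^ (∑ j, α j) := Finset.sum_le_sum fun α hα =>
        pow_le_pow_of_le_one (by norm_num) (by norm_num) (hm α hα)
    _ = _ := by
        rw [hJ]
        refine Finset.sum_congr rfl fun α _ => ?_
        split_ifs <;> simp [e]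

/-- **Projection constants of spaces of analytic polynomials on the torus
(equivalently, polynomials on `ℓ∞ⁿ`) supported on a finite index set `J`.** -/
theorem stmt_4 (n : ℕ) (J : Finset (Fin n → ℕ)) (hJ : J.Nonempty)
    [MeasurableSpace (Fin n → Circle)] [BorelSpace (Fin n → Circle)]
    (μ : Measure (Fin n → Circle)) [μ.IsHaarMeasure] [IsProbabilityMeasure μ] :
    let V : Submodule ℂ C((Fin n → Circle), ℂ) := Submodule.span ℂ (torusMonomial n '' ↑J)
    (sInf {r : ℝ | ∃ Q : C((Fin n → Circle), ℂ) →L[ℂ] C((Fin n → Circle), ℂ),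
        (∀ f, Q f ∈ V) ∧ (∀ f ∈ V, Q f = f) ∧ ‖Q‖ = r}
      = ∫ z, ‖∑ α ∈ J, torusMonomial n α z‖ ∂μ) ∧
    ∀ m : ℕ, (∀ α ∈ J, ∑ j, α j ≤ m) →
      (2 : ℝ) ^ (-(m : ℝ) / 2) * Real.sqrt J.card ≤ ∫ z, ‖∑ α ∈ J, torusMonomial n α z‖ ∂μ ∧
      (∫ z, ‖∑ α ∈ J, torusMonomial n α z‖ ∂μ) ≤ Real.sqrt J.card := by
  intro V
  have h := isCharFamily_torus n
  refine ⟨h.sInf_norm_proj J, fun m hm => ⟨?_, ?_⟩⟩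
  · refine le_of_sq_le_sq ?_ (integral_nonneg fun z => norm_nonneg _)
    refine le_trans (le_of_eq ?_) (weissler_torus n J μ m hm)
    rw [mul_pow, Real.sq_sqrt (Nat.cast_nonneg _), ← Real.rpow_natCast, ← Real.rpow_mul (by norm_num)]
    congr 1
    rw [one_div, inv_pow, ← Real.rpow_natCast, ← Real.rpow_neg (by norm_num)]
    congr 1
    push_cast
    ring
  · have h1 := integral_norm_le_sqrt (μ := μ) (∑ α ∈ J, (1 : ℂ) • torusMonomial n α)
    rw [h.parseval J fun _ => 1] at h1
    simpa using h1
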